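/- Let d ≥ 5. The function f(ρ) = (1−ρ²)^{(5−d)/2} f_0(ρ), where f_0(ρ) = (d−4−3ρ²)/(d−4+3ρ²)², solves the mode ODE with parameter λ = d−4 on (0,1), i.e., (1−ρ²)f''(ρ) + ((d−1)/ρ − 2(d−2)ρ)f'(ρ) − ((d−3)(d−2) − 24(d−1)(d−4)/(d−4+3ρ²)²)f(ρ) = 0 for all ρ ∈ (0,1). -/

import Mathlib

lemma aux_hasDerivAt (a : ℝ) (q : ℝ → ℝ) (q' x : ℝ) (hx : 0 < 1 - x ^ 2)
    (hq : HasDerivAt q q' x) :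
    HasDerivAt (fun y => (1 - y ^ 2) ^ a * q y)
      ((1 - x ^ 2) ^ (a - 1) * (-2 * a * x * q x + (1 - x ^ 2) * q')) x := by
  have h1 : HasDerivAt (fun y : ℝ => 1 - y ^ 2) (-(2 * x)) x := by
    simpa using (hasDerivAt_pow 2 x).const_sub 1
  have h2 := (h1.rpow_const (p := a) (Or.inl hx.ne')).mul hq
  refine h2.congr_deriv ?_
  have h3 : (1 - x ^ 2) ^ a = (1 - x ^ 2) ^ (a - 1) * (1 - x ^ 2) := by
    rw [Real.rpow_sub_one hx.ne']; field_simp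
  rw [h3]; ring

/-- For `d ≥ 5`, the function `f(ρ) = (1−ρ²)^{(5−d)/2} f₀(ρ)`, with
`f₀(ρ) = (d−4−3ρ²)/(d−4+3ρ²)²`, solves the mode ODE with parameter `λ = d−4`
on `(0,1)`. -/
theorem conformal_mode_solves_mode_ODE (d : ℕ) (hd : 5 ≤ d)
    (f₀ : ℝ → ℝ)
    (hf₀ : ∀ ρ, f₀ ρ = ((d : ℝ) - 4 - 3 * ρ ^ 2) / ((d : ℝ) - 4 + 3 * ρ ^ 2) ^ 2)
    (f : ℝ → ℝ)
    (hf : ∀ ρ, f ρ = (1 - ρ ^ 2) ^ ((5 - (d : ℝ)) / 2) * f₀ ρ) :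
    ∀ ρ ∈ Set.Ioo (0 : ℝ) 1,
      (1 - ρ ^ 2) * iteratedDeriv 2 f ρ
        + (((d : ℝ) - 1) / ρ - 2 * ((d : ℝ) - 2) * ρ) * deriv f ρ
        - (((d : ℝ) - 3) * ((d : ℝ) - 2)
            - 24 * ((d : ℝ) - 1) * ((d : ℝ) - 4) /
                ((d : ℝ) - 4 + 3 * ρ ^ 2) ^ 2) * f ρ = 0 := by
  intro ρ hρ
  have hd' : (5 : ℝ) ≤ d := by exact_mod_cast hd
  generalize (d : ℝ) = c at *
  have hD : ∀ x : ℝ, 0 < c - 4 + 3 * x ^ 2 := fun x => by nlinarith [sq_nonneg x]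
  have hw : ∀ x ∈ Set.Ioo (0 : ℝ) 1, 0 < 1 - x ^ 2 := fun x hx => by nlinarith [hx.1, hx.2]
  have hsq : ∀ x : ℝ, HasDerivAt (fun y : ℝ => 3 * y ^ 2) (6 * x) x := fun x =>
    ((hasDerivAt_pow 2 x).const_mul 3).congr_deriv (by norm_num; ring)
  have hND : ∀ x : ℝ, HasDerivAt (fun y : ℝ => c - 4 - 3 * y ^ 2) (-(6 * x)) x := fun x =>
    (hsq x).const_sub _
  have hDD : ∀ x : ℝ, HasDerivAt (fun y : ℝ => c - 4 + 3 * y ^ 2) (6 * x) x := fun x =>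
    (hsq x).const_add _
  have hff : f = fun y => (1 - y ^ 2) ^ ((5 - c) / 2) *
      ((c - 4 - 3 * y ^ 2) / (c - 4 + 3 * y ^ 2) ^ 2) := by
    funext y; rw [hf, hf₀]
  have hq : ∀ x : ℝ, HasDerivAt (fun y : ℝ => (c - 4 - 3 * y ^ 2) / (c - 4 + 3 * y ^ 2) ^ 2)
      ((-(6 * x) * (3 * (c - 4) - 3 * x ^ 2)) / (c - 4 + 3 * x ^ 2) ^ 3) x := fun x => by
    refine ((hND x).div ((hDD x).pow 2) (pow_ne_zero 2 (hD x).ne')).congr_deriv ?_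
    have := (hD x).ne'
    simp only [Pi.pow_apply, Nat.add_one_sub_one, Nat.reduceSub, Nat.cast_ofNat, pow_one]
    field_simp
    ring
  have h1 : ∀ x ∈ Set.Ioo (0 : ℝ) 1, deriv f x = (1 - x ^ 2) ^ ((5 - c) / 2 - 1) *
      (((c - 5) * x * (c - 4 - 3 * x ^ 2) * (c - 4 + 3 * x ^ 2)
        + (1 - x ^ 2) * (-(6 * x) * (3 * (c - 4) - 3 * x ^ 2))) / (c - 4 + 3 * x ^ 2) ^ 3) := by
    intro x hx
    rw [hff, (aux_hasDerivAt _ _ _ x (hw x hx) (hq x)).deriv]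
    have := (hD x).ne'
    field_simp
    ring
  have hP : HasDerivAt (fun x : ℝ => (c - 5) * x * (c - 4 - 3 * x ^ 2) * (c - 4 + 3 * x ^ 2)
        + (1 - x ^ 2) * (-(6 * x) * (3 * (c - 4) - 3 * x ^ 2)))
      ((c - 5) * ((c - 4) ^ 2 - 45 * ρ ^ 4) - 18 * (c - 4) + 54 * (c - 4) * ρ ^ 2
        + 54 * ρ ^ 2 - 90 * ρ ^ 4) ρ := by
    have e : (fun x : ℝ => (c - 5) * x * (c - 4 - 3 * x ^ 2) * (c - 4 + 3 * x ^ 2)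
        + (1 - x ^ 2) * (-(6 * x) * (3 * (c - 4) - 3 * x ^ 2))) = fun x : ℝ =>
        ((c - 5) * (c - 4) ^ 2 - 18 * (c - 4)) * x ^ 1 + (18 * (c - 4) + 18) * x ^ 3
        + (-9 * (c - 5) - 18) * x ^ 5 := by
      funext x; ring
    rw [e]
    refine ((((hasDerivAt_pow 1 ρ).const_mul _).add ((hasDerivAt_pow 3 ρ).const_mul _)).add
      ((hasDerivAt_pow 5 ρ).const_mul _)).congr_deriv ?_
    norm_num
    ring
  have h2 := aux_hasDerivAt ((5 - c) / 2 - 1) _ _ ρ (hw ρ hρ)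
    (hP.div ((hDD ρ).pow 3) (pow_ne_zero 3 (hD ρ).ne'))
  have h3 : deriv (deriv f) ρ = _ := Filter.EventuallyEq.deriv_eq
    (Filter.eventuallyEq_of_mem (Ioo_mem_nhds hρ.1 hρ.2) h1)
  have h4 := h3.trans h2.deriv
  rw [iteratedDeriv_succ, iteratedDeriv_one, h4, h1 ρ hρ, hf, hf₀]
  have hwρ := (hw ρ hρ).ne'
  have e1 : (1 - ρ ^ 2) ^ ((5 - c) / 2 - 1) =
      (1 - ρ ^ 2) ^ ((5 - c) / 2 - 1 - 1) * (1 - ρ ^ 2) := by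
    rw [Real.rpow_sub_one hwρ ((5 - c) / 2 - 1)]; field_simp
  have e0 : (1 - ρ ^ 2) ^ ((5 - c) / 2) =
      (1 - ρ ^ 2) ^ ((5 - c) / 2 - 1 - 1) * (1 - ρ ^ 2) * (1 - ρ ^ 2) := by
    rw [← e1, Real.rpow_sub_one hwρ ((5 - c) / 2)]; field_simp
  rw [e0, e1]
  generalize (1 - ρ ^ 2) ^ ((5 - c) / 2 - 1 - 1) = W
  have hDρ := (hD ρ).ne'
  have hρ0 := hρ.1.ne'
  simp only [Pi.pow_apply, Pi.div_apply, Nat.reduceSub, Nat.cast_ofNat]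
  clear h1 h2 h3 h4 hP hq hff hDD hND hsq hw hD hf hf₀ e0 e1 hd'
  generalize hDe : c - 4 + 3 * ρ ^ 2 = D at *
  obtain rfl : c = D + 4 - 3 * ρ ^ 2 := by linarith
  field_simp
  ring
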